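/- Tightness and checkers head normal forms: let h be a checkers head normal form. (1) Existence: there is a derivation Γ ⊢^k h : L whose typing (Γ, L) is tight. (2) Zero interaction: if Γ ⊢^k h : L with (Γ, L) tight, then k = 0. -/

import Mathlib

set_option autoImplicit false

/-! ### Players -/

inductive Player : Type
  | white
  | black
deriving DecidableEq

/-- The opposite player. -/
def Player.op : Player → Player
  | .white => .black
  | .black => .white

/-- `gamma p q` is `0` if the players agree (silent) and `1` otherwise (interaction). -/
def Player.gamma (p q : Player) : ℕ := if p = q then 0 else 1

/-! ### Ordinary λ-terms (de Bruijn representation) -/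

inductive Lam : Type
  | var : ℕ → Lam
  | lam : Lam → Lam
  | app : Lam → Lam → Lam
deriving DecidableEq

namespace Lam

/-- Shift the free de Bruijn indices ≥ `d` by one. -/
def liftAt : Lam → ℕ → Lam
  | .var n, d => .var (if n < d then n else n + 1)
  | .lam t, d => .lam (t.liftAt (d + 1))
  | .app t u, d => .app (t.liftAt d) (u.liftAt d)

/-- Capture-avoiding substitution of `u` for the de Bruijn index `x`. -/
def subst : Lam → ℕ → Lam → Lam
  | .var n, x, u => if n = x then u else if x < n then .var (n - 1) else .var n
  | .lam t, x, u => .lam (t.subst (x + 1) (u.liftAt 0))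
  | .app t s, x, u => .app (t.subst x u) (s.subst x u)

end Lam

/-- Root β-rule: `(λx.t) u ↦ t[x:=u]`. -/
inductive LBetaRoot : Lam → Lam → Prop
  | beta (t u : Lam) : LBetaRoot (.app (.lam t) u) (t.subst 0 u)

/-- Root η-rule: `λx. t x ↦ t` with `x ∉ FV(t)` (enforced by the lifting). -/
inductive LEtaRoot : Lam → Lam → Prop
  | eta (t : Lam) : LEtaRoot (.lam (.app (t.liftAt 0) (.var 0))) t

/-- Closure of a root relation under all contexts. -/
inductive LFull (R : Lam → Lam → Prop) : Lam → Lam → Prop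
  | root {t u : Lam} : R t u → LFull R t u
  | lam {t u : Lam} : LFull R t u → LFull R (.lam t) (.lam u)
  | appL {t t' : Lam} (u : Lam) : LFull R t t' → LFull R (.app t u) (.app t' u)
  | appR (t : Lam) {u u' : Lam} : LFull R u u' → LFull R (.app t u) (.app t u')

/-- Closure under applicative spine contexts `⟨·⟩ t1 … tk`. -/
inductive LSpine (R : Lam → Lam → Prop) : Lam → Lam → Prop
  | root {t u : Lam} : R t u → LSpine R t u
  | appL {t t' : Lam} (u : Lam) : LSpine R t t' → LSpine R (.app t u) (.app t' u)

/-- Closure under head contexts `λx1…xn.⟨·⟩ t1 … tk`. -/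
inductive LHead (R : Lam → Lam → Prop) : Lam → Lam → Prop
  | spine {t u : Lam} : LSpine R t u → LHead R t u
  | lam {t u : Lam} : LHead R t u → LHead R (.lam t) (.lam u)

/-- β-reduction. -/
def LBeta : Lam → Lam → Prop := LFull LBetaRoot
/-- η-reduction. -/
def LEta : Lam → Lam → Prop := LFull LEtaRoot
/-- Head reduction. -/
def LHStep : Lam → Lam → Prop := LHead LBetaRoot
/-- Multistep head reduction. -/
def LHSteps : Lam → Lam → Prop := Relation.ReflTransGen LHStep

/-- β-conversion (reflexive-symmetric-transitive closure of β-reduction). -/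
def LBetaConv : Lam → Lam → Prop :=
  Relation.ReflTransGen (fun a b => LBeta a b ∨ LBeta b a)
/-- η-conversion. -/
def LEtaConv : Lam → Lam → Prop :=
  Relation.ReflTransGen (fun a b => LEta a b ∨ LEta b a)

/-- Head normal forms: no head step out of `t`. -/
def Lam.LHNF (t : Lam) : Prop := ∀ u, ¬ LHStep t u

/-- Head convergence: `t ⇓h`. -/
def Lam.HConv (t : Lam) : Prop := ∃ h, LHSteps t h ∧ h.LHNF

/-- Ordinary contexts (one hole). -/
inductive LCtx : Type
  | hole : LCtx
  | lam : LCtx → LCtx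
  | appL : LCtx → Lam → LCtx
  | appR : Lam → LCtx → LCtx

/-- Plugging (allowing variable capture). -/
def LCtx.fill : LCtx → Lam → Lam
  | .hole, t => t
  | .lam C, t => .lam (C.fill t)
  | .appL C u, t => .app (C.fill t) u
  | .appR s C, t => .app s (C.fill t)

/-- Head contextual preorder on λ-terms. -/
def CtxLe (t u : Lam) : Prop := ∀ C : LCtx, (C.fill t).HConv → (C.fill u).HConv

/-! ### Checkers terms -/

inductive CTerm : Type
  | var : ℕ → CTerm
  | lam : Player → CTerm → CTerm
  | app : Player → CTerm → CTerm → CTerm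
deriving DecidableEq

namespace CTerm

/-- Shift the free de Bruijn indices ≥ `d` by one. -/
def liftAt : CTerm → ℕ → CTerm
  | .var n, d => .var (if n < d then n else n + 1)
  | .lam p t, d => .lam p (t.liftAt (d + 1))
  | .app p t u, d => .app p (t.liftAt d) (u.liftAt d)

/-- Capture-avoiding substitution of `u` for the de Bruijn index `x`. -/
def subst : CTerm → ℕ → CTerm → CTerm
  | .var n, x, u => if n = x then u else if x < n then .var (n - 1) else .var n
  | .lam p t, x, u => .lam p (t.subst (x + 1) (u.liftAt 0))
  | .app p t s, x, u => .app p (t.subst x u) (s.subst x u)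

/-- The underlying ordinary λ-term of a checkers term. -/
def untag : CTerm → Lam
  | .var n => .var n
  | .lam _ t => .lam t.untag
  | .app _ t u => .app t.untag u.untag

end CTerm

/-- Player lifting: tag every abstraction and application with player `p`. -/
def Lam.tag : Lam → Player → CTerm
  | .var n, _ => .var n
  | .lam t, p => .lam p (t.tag p)
  | .app t u, p => .app p (t.tag p) (u.tag p)

/-- Silent β root rule: the abstraction and the application carry the same player. -/
inductive SilentRoot : CTerm → CTerm → Prop
  | beta (p : Player) (t u : CTerm) : SilentRoot (.app p (.lam p t) u) (t.subst 0 u)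

/-- Interaction β root rule: the application carries the opposite player of the abstraction. -/
inductive InterRoot : CTerm → CTerm → Prop
  | beta (p : Player) (t u : CTerm) : InterRoot (.app p.op (.lam p t) u) (t.subst 0 u)

/-- Closure of a root relation under all checkers contexts. -/
inductive CFull (R : CTerm → CTerm → Prop) : CTerm → CTerm → Prop
  | root {t u : CTerm} : R t u → CFull R t u
  | lam (p : Player) {t u : CTerm} : CFull R t u → CFull R (.lam p t) (.lam p u)
  | appL (p : Player) {t t' : CTerm} (u : CTerm) : CFull R t t' → CFull R (.app p t u) (.app p t' u)
  | appR (p : Player) (t : CTerm) {u u' : CTerm} : CFull R u u' → CFull R (.app p t u) (.app p t u')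

/-- Closure under applicative spine contexts `⟨·⟩ @_{q1} t1 … @_{qk} tk`. -/
inductive CSpine (R : CTerm → CTerm → Prop) : CTerm → CTerm → Prop
  | root {t u : CTerm} : R t u → CSpine R t u
  | appL (p : Player) {t t' : CTerm} (u : CTerm) : CSpine R t t' → CSpine R (.app p t u) (.app p t' u)

/-- Closure under checkers head contexts `λ_{p1}x1…λ_{pn}xn.⟨·⟩ @_{q1} t1 … @_{qk} tk`. -/
inductive CHead (R : CTerm → CTerm → Prop) : CTerm → CTerm → Prop
  | spine {t u : CTerm} : CSpine R t u → CHead R t u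
  | lam (p : Player) {t u : CTerm} : CHead R t u → CHead R (.lam p t) (.lam p u)

/-- Silent β-reduction `→τ`. -/
def StepTau : CTerm → CTerm → Prop := CFull SilentRoot
/-- Interaction β-reduction `→⊛`. -/
def StepInt : CTerm → CTerm → Prop := CFull InterRoot
/-- Checkers β-reduction `→βch`. -/
def StepBch (t u : CTerm) : Prop := StepTau t u ∨ StepInt t u

/-- Silent head reduction `→hτ`. -/
def HStepTau : CTerm → CTerm → Prop := CHead SilentRoot
/-- Interaction head reduction `→h⊛`. -/
def HStepInt : CTerm → CTerm → Prop := CHead InterRoot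
/-- Checkers head reduction `→hch`. -/
def HStepCh (t u : CTerm) : Prop := HStepTau t u ∨ HStepInt t u

/-- Checkers head normal form. -/
def CTerm.HNF (t : CTerm) : Prop := ∀ u, ¬ HStepCh t u

/-- `BigStep t k` means `t ⇓^k`: the (deterministic) checkers head evaluation of `t`
terminates and performs exactly `k` interaction steps. -/
inductive BigStep : CTerm → ℕ → Prop
  | nf {t : CTerm} : t.HNF → BigStep t 0
  | silent {t u : CTerm} {k : ℕ} : HStepTau t u → BigStep u k → BigStep t k
  | inter {t u : CTerm} {k : ℕ} : HStepInt t u → BigStep u k → BigStep t (k + 1)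

/-- `HRed t n i u`: a checkers head reduction sequence from `t` to `u` of length `n`
containing exactly `i` interaction steps. -/
inductive HRed : CTerm → ℕ → ℕ → CTerm → Prop
  | refl (t : CTerm) : HRed t 0 0 t
  | silent {t u s : CTerm} {n i : ℕ} : HStepTau t u → HRed u n i s → HRed t (n + 1) i s
  | inter {t u s : CTerm} {n i : ℕ} : HStepInt t u → HRed u n i s → HRed t (n + 1) (i + 1) s

/-- Checkers contexts (one hole). -/
inductive CCtx : Type
  | hole : CCtx
  | lam : Player → CCtx → CCtx
  | appL : Player → CCtx → CTerm → CCtx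
  | appR : Player → CTerm → CCtx → CCtx

/-- Plugging (allowing variable capture). -/
def CCtx.fill : CCtx → CTerm → CTerm
  | .hole, t => t
  | .lam p C, t => .lam p (C.fill t)
  | .appL p C u, t => .app p (C.fill t) u
  | .appR p s C, t => .app p s (C.fill t)

/-- Player lifting of ordinary contexts. -/
def LCtx.tag : LCtx → Player → CCtx
  | .hole, _ => .hole
  | .lam C, p => .lam p (C.tag p)
  | .appL C u, p => .appL p (C.tag p) (u.tag p)
  | .appR s C, p => .appR p (s.tag p) (C.tag p)

/-- Checkers interaction preorder `≼ctx⊛` on checkers terms. -/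
def IntCtxLe (t u : CTerm) : Prop :=
  ∀ (C : CCtx) (k : ℕ), BigStep (C.fill t) k → BigStep (C.fill u) k

/-- Checkers interaction improvement `≼imp⊛` on checkers terms. -/
def ImpCtxLe (t u : CTerm) : Prop :=
  ∀ (C : CCtx) (k : ℕ), BigStep (C.fill t) k → ∃ k', k' ≤ k ∧ BigStep (C.fill u) k'

/-- Interaction preorder `⊑int` on ordinary λ-terms, via black lifting. -/
def IntLe (t u : Lam) : Prop := IntCtxLe (t.tag .black) (u.tag .black)

/-- Interaction improvement `⊑int·imp` on ordinary λ-terms, via black lifting. -/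
def ImpLe (t u : Lam) : Prop := ImpCtxLe (t.tag .black) (u.tag .black)

/-- Interaction equivalence `≡int`. -/
def IntEq (t u : Lam) : Prop := IntLe t u ∧ IntLe u t

/-- Silent conversion `=τ`: reflexive-symmetric-transitive closure of `→τ`. -/
def SilentConv : CTerm → CTerm → Prop :=
  Relation.ReflTransGen (fun a b => StepTau a b ∨ StepTau b a)


/-! ### Checkers multi types -/

/-- Linear types: an atom `X` and arrows `M →_{p,q} L`, where a multi type `M`
is a finite multiset of linear types (syntactically represented as a list). -/
inductive LType : Type
  | atom : LType
  | arrow : List LType → Player → Player → LType → LType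

/-- Type environments: a multi type for every de Bruijn index. -/
abbrev TEnv : Type := ℕ → Multiset LType

/-- The empty type environment. -/
def TEnv.zero : TEnv := fun _ => 0

/-- Pointwise multiset union of type environments. -/
def TEnv.add (Γ Δ : TEnv) : TEnv := fun n => Γ n + Δ n

/-- The environment assigning `[L]` to `x` and `0` elsewhere. -/
def TEnv.single (x : ℕ) (L : LType) : TEnv := fun n => if n = x then {L} else 0

/-- Extend an environment with a multi type for the freshly bound de Bruijn index `0`. -/
def TEnv.cons (M : Multiset LType) (Γ : TEnv) : TEnv := fun n =>
  match n with
  | 0 => M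
  | n + 1 => Γ n

mutual
  /-- Type derivations `π ▷ Γ ⊢^k t : L` of the checkers multi type system. -/
  inductive Deriv : TEnv → ℕ → CTerm → LType → Type
    | ax (x : ℕ) (L : LType) : Deriv (TEnv.single x L) 0 (.var x) L
    | lam {Γ : TEnv} {k : ℕ} {t : CTerm} {L : LType} (p q : Player) (M : List LType) :
        Deriv (TEnv.cons (Multiset.ofList M) Γ) k t L →
        Deriv Γ k (.lam p t) (.arrow M p q L)
    | app {Γ Δ : TEnv} {k₁ k₂ : ℕ} {t u : CTerm} {M : List LType} {p q : Player} {L : LType} :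
        Deriv Γ k₁ t (.arrow M p q L) → DerivM Δ k₂ u M →
        Deriv (TEnv.add Γ Δ) (k₁ + k₂ + Player.gamma p q) (.app q t u) L
  /-- Derivations `Γ ⊢^k t : M` of a multi type (the `many` rule). -/
  inductive DerivM : TEnv → ℕ → CTerm → List LType → Type
    | nil (t : CTerm) : DerivM TEnv.zero 0 t []
    | cons {Γ Δ : TEnv} {k k' : ℕ} {t : CTerm} {L : LType} {M : List LType} :
        Deriv Γ k t L → DerivM Δ k' t M → DerivM (TEnv.add Γ Δ) (k + k') t (L :: M)
end

mutual
  /-- The (applicative) size `|π|` of a derivation: its number of `@` rules. -/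
  def Deriv.size {Γ : TEnv} {k : ℕ} {t : CTerm} {L : LType} : Deriv Γ k t L → ℕ
    | .ax _ _ => 0
    | .lam _ _ _ π => Deriv.size π
    | .app π μ => Deriv.size π + DerivM.size μ + 1
  /-- Size of a multi-type derivation. -/
  def DerivM.size {Γ : TEnv} {k : ℕ} {t : CTerm} {M : List LType} : DerivM Γ k t M → ℕ
    | .nil _ => 0
    | .cons π μ => Deriv.size π + DerivM.size μ
end

/-- Typability `Γ ⊢^k t : L`. -/
def TJ (Γ : TEnv) (k : ℕ) (t : CTerm) (L : LType) : Prop := Nonempty (Deriv Γ k t L)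

/-- Checkers relational interpretation `⟦t⟧⊛ = {(Γ, k, L) | Γ ⊢^k t : L}`. -/
def CSem (t : CTerm) : Set (TEnv × ℕ × LType) := {x | TJ x.1 x.2.1 t x.2.2}

/-- Black type preorder `⊑•type` on ordinary λ-terms. -/
def BTypeLe (t u : Lam) : Prop := CSem (t.tag .black) ⊆ CSem (u.tag .black)

/-! ### Tight typings -/

/-- All arrows occurring in a linear type are silent (`p = q`). -/
inductive AllSilent : LType → Prop
  | atom : AllSilent .atom
  | arrow {M : List LType} {p : Player} {L : LType} :
      (∀ L' ∈ M, AllSilent L') → AllSilent L → AllSilent (.arrow M p p L)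

/-- The number of nonempty multi types occurring in a linear type. -/
def LType.neCount : LType → ℕ
  | .atom => 0
  | .arrow M _ _ L =>
      min M.length 1 + (M.attach.map fun x => LType.neCount x.1).sum + LType.neCount L
decreasing_by
  · have := List.sizeOf_lt_of_mem x.2
    simp only [LType.arrow.sizeOf_spec]
    omega
  · simp only [LType.arrow.sizeOf_spec]
    omega

/-- The number of nonempty multi types occurring in a multi type (counting itself). -/
def mNeCount (m : Multiset LType) : ℕ :=
  min (Multiset.card m) 1 + (m.map LType.neCount).sum

/-- A typing `(Γ, L)` is tight when all the multi types occurring in `Γ` and `L`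
are empty except for exactly one, and all arrows occurring in `(Γ, L)` are silent. -/
def Tight (Γ : TEnv) (L : LType) : Prop :=
  AllSilent L ∧ (∀ n : ℕ, ∀ L' ∈ Γ n, AllSilent L') ∧
    ∃ S : Finset ℕ, (∀ n : ℕ, n ∉ S → Γ n = 0) ∧
      (∑ n ∈ S, mNeCount (Γ n)) + LType.neCount L = 1

/-! A head normal form is a neutral term `y @_{q1} t1 … @_{qk} tk` under abstractions. Typing an
abstraction only moves the multi type of its variable from the environment into the arrow type, so
with a silent arrow it preserves tightness in both directions, and only neutral terms matter. There,
tightness forces the head variable `y` to have a type `[] →_{q1,q1} … [] →_{qk,qk} L`: no argument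
is typed and every application is silent. Conversely, giving `y` such a type yields a tight typing
as soon as `L` itself has only empty multi types and silent arrows. -/

/-! ### Head normal forms -/

theorem CHead.app_left {R : CTerm → CTerm → Prop} {p q : Player} {t s r u : CTerm}
    (step : CHead R (.app p t s) r) : CHead R (.app q (.app p t s) u) (.app q r u) := by
  cases step with
  | spine step => exact .spine (.appL q u step)

namespace CTerm

/-- Neutral terms `y @_{q1} t1 … @_{qk} tk`, the bodies of head normal forms. -/
inductive Neutral : CTerm → Prop
  | var (y : ℕ) : Neutral (.var y)
  | app (q : Player) {t : CTerm} (u : CTerm) : Neutral t → Neutral (.app q t u)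

/-- The head normal forms given by their grammar
`λ_{p1}x1…λ_{pn}xn. y @_{q1} t1 … @_{qk} tk`, which unlike `CTerm.HNF` allows induction. -/
inductive HeadNormal : CTerm → Prop
  | neutral {t : CTerm} : Neutral t → HeadNormal t
  | lam (p : Player) {t : CTerm} : HeadNormal t → HeadNormal (.lam p t)

theorem not_hnf_app_lam (p q : Player) (t u : CTerm) : ¬ (app q (lam p t) u).HNF := by
  intro h
  cases p <;> cases q
  · exact h _ (.inl (.spine (.root (.beta _ _ _))))
  · exact h _ (.inr (.spine (.root (.beta .white _ _))))
  · exact h _ (.inr (.spine (.root (.beta .black _ _))))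
  · exact h _ (.inl (.spine (.root (.beta _ _ _))))

theorem HNF.of_lam {p : Player} {t : CTerm} (h : (lam p t).HNF) : t.HNF := fun u step =>
  h (.lam p u) (step.imp (.lam p) (.lam p))

theorem HNF.of_app_app {p q : Player} {t s u : CTerm} (h : (app q (app p t s) u).HNF) :
    (app p t s).HNF := fun r step =>
  h (.app q r u) (step.imp CHead.app_left CHead.app_left)

theorem HNF.neutral_app {q : Player} {t u : CTerm} (h : (app q t u).HNF) :
    (app q t u).Neutral := by
  induction t generalizing q u with
  | var y => exact .app q u (.var y)
  | lam p t => exact (not_hnf_app_lam p q t u h).elim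
  | app p t s ih => exact .app q u (ih h.of_app_app)

theorem HNF.headNormal {t : CTerm} (h : t.HNF) : t.HeadNormal := by
  induction t with
  | var y => exact .neutral (.var y)
  | lam p t ih => exact .lam p (ih h.of_lam)
  | app q t u => exact .neutral h.neutral_app

end CTerm

/-! ### Inert types -/

theorem allSilent_arrow_iff {M : List LType} {p q : Player} {L : LType} :
    AllSilent (.arrow M p q L) ↔ p = q ∧ (∀ L' ∈ M, AllSilent L') ∧ AllSilent L := by
  constructor
  · rintro (_ | ⟨hM, hL⟩)
    exact ⟨rfl, hM, hL⟩
  · rintro ⟨rfl, hM, hL⟩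
    exact .arrow hM hL

theorem mNeCount_zero : mNeCount 0 = 0 := by simp [mNeCount]

theorem mNeCount_singleton (L : LType) : mNeCount {L} = 1 + L.neCount := by simp [mNeCount]

theorem mNeCount_eq_zero_iff {m : Multiset LType} : mNeCount m = 0 ↔ m = 0 := by
  constructor
  · intro h
    rw [← Multiset.card_eq_zero]
    unfold mNeCount at h
    omega
  · rintro rfl
    exact mNeCount_zero

theorem one_add_neCount_le_mNeCount {m : Multiset LType} {L : LType} (hL : L ∈ m) :
    1 + L.neCount ≤ mNeCount m := by
  obtain ⟨m, rfl⟩ := Multiset.exists_cons_of_mem hL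
  simp only [mNeCount, Multiset.card_cons, Multiset.map_cons, Multiset.sum_cons]
  omega

namespace LType

theorem neCount_arrow (M : List LType) (p q : Player) (L : LType) :
    (arrow M p q L).neCount = mNeCount M + L.neCount := by
  rw [neCount, mNeCount]
  simp

/-- Inert types: linear types `[] →_{p1,p1} … [] →_{pn,pn} X`, in which every multi type is empty
and every arrow silent. They are the types of head variables in tight typings. -/
def Inert (L : LType) : Prop := AllSilent L ∧ L.neCount = 0

theorem inert_atom : atom.Inert := ⟨.atom, by rw [neCount]⟩

theorem inert_arrow_iff {M : List LType} {p q : Player} {L : LType} :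
    (arrow M p q L).Inert ↔ M = [] ∧ p = q ∧ L.Inert := by
  rw [Inert, allSilent_arrow_iff, neCount_arrow, Nat.add_eq_zero_iff, mNeCount_eq_zero_iff,
    Multiset.coe_eq_zero]
  constructor
  · rintro ⟨⟨hpq, -, hs⟩, rfl, hc⟩
    exact ⟨rfl, hpq, hs, hc⟩
  · rintro ⟨rfl, hpq, hs, hc⟩
    exact ⟨⟨hpq, by simp, hs⟩, rfl, hc⟩

end LType

/-! ### Tight typings -/

namespace TEnv

theorem add_zero (Γ : TEnv) : Γ.add zero = Γ := by
  funext n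
  simp [add, zero]

theorem cons_head_tail (Γ : TEnv) : cons (Γ 0) (fun n => Γ (n + 1)) = Γ := by
  funext n
  cases n <;> rfl

theorem forall_mem_cons {P : LType → Prop} {M : Multiset LType} {Γ : TEnv} :
    (∀ n, ∀ L ∈ cons M Γ n, P L) ↔ (∀ L ∈ M, P L) ∧ ∀ n, ∀ L ∈ Γ n, P L :=
  (Nat.and_forall_add_one (p := fun n => ∀ L ∈ cons M Γ n, P L)).symm

theorem mem_single {n y : ℕ} {L T : LType} : L ∈ single y T n ↔ n = y ∧ L = T := by
  by_cases h : n = y <;> simp [single, h]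

end TEnv

theorem tight_iff_of_forall_notMem {Γ : TEnv} {L : LType} {S : Finset ℕ}
    (hS : ∀ n ∉ S, Γ n = 0) :
    Tight Γ L ↔ AllSilent L ∧ (∀ n, ∀ L' ∈ Γ n, AllSilent L') ∧
      (∑ n ∈ S, mNeCount (Γ n)) + L.neCount = 1 := by
  have sum_eq_finsum : ∀ S' : Finset ℕ, (∀ n ∉ S', Γ n = 0) →
      ∑ n ∈ S', mNeCount (Γ n) = ∑ᶠ n, mNeCount (Γ n) := fun S' hS' =>
    (finsum_eq_sum_of_support_subset _ fun n hn => by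
      by_contra hnS'
      exact hn ((congrArg mNeCount (hS' n hnS')).trans mNeCount_zero)).symm
  refine and_congr_right fun _ => and_congr_right fun _ => ⟨?_, fun h => ⟨S, hS, h⟩⟩
  rintro ⟨S', hS', h⟩
  rwa [sum_eq_finsum S hS, ← sum_eq_finsum S' hS']

theorem Tight.exists_forall_ge_eq_zero {Γ : TEnv} {L : LType} (h : Tight Γ L) :
    ∃ N, ∀ n ≥ N, Γ n = 0 := by
  obtain ⟨-, -, S, hS, -⟩ := h
  obtain ⟨N, hN⟩ := S.exists_nat_subset_range
  exact ⟨N, fun n hn => hS n fun hnS => (Finset.mem_range.1 (hN hnS)).not_ge hn⟩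

theorem tight_iff_of_forall_ge {Γ : TEnv} {L : LType} {N : ℕ} (hN : ∀ n ≥ N, Γ n = 0) :
    Tight Γ L ↔ AllSilent L ∧ (∀ n, ∀ L' ∈ Γ n, AllSilent L') ∧
      (∑ n ∈ Finset.range N, mNeCount (Γ n)) + L.neCount = 1 :=
  tight_iff_of_forall_notMem fun n hn => hN n (by simpa using hn)

theorem tight_arrow_iff {Γ : TEnv} {M : List LType} {p q : Player} {L : LType} :
    Tight Γ (.arrow M p q L) ↔ p = q ∧ Tight (.cons M Γ) L := by
  suffices of_forall_ge : ∀ N, (∀ n ≥ N, Γ n = 0) →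
      (Tight Γ (.arrow M p q L) ↔ p = q ∧ Tight (.cons M Γ) L) by
    constructor
    · intro h
      obtain ⟨N, hN⟩ := h.exists_forall_ge_eq_zero
      exact (of_forall_ge N hN).1 h
    · intro h
      obtain ⟨N, hN⟩ := h.2.exists_forall_ge_eq_zero
      exact (of_forall_ge N fun n hn => hN (n + 1) (by omega)).2 h
  intro N hN
  have hN' : ∀ n ≥ N + 1, TEnv.cons M Γ n = 0
    | n + 1, hn => hN n (by omega)
  rw [tight_iff_of_forall_ge hN, tight_iff_of_forall_ge hN', TEnv.forall_mem_cons,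
    allSilent_arrow_iff, LType.neCount_arrow, Finset.sum_range_succ']
  simp only [TEnv.cons, Multiset.mem_coe, add_assoc]
  tauto

theorem tight_single {L T : LType} (y : ℕ) (hT : T.Inert) (hL : L.Inert) :
    Tight (.single y T) L := by
  refine (tight_iff_of_forall_notMem (S := {y}) fun n hn => ?_).2 ⟨hL.1, fun n L' hL' => ?_, ?_⟩
  · exact if_neg (by simpa using hn)
  · obtain ⟨-, rfl⟩ := TEnv.mem_single.1 hL'
    exact hT.1
  · simp [TEnv.single, mNeCount_singleton, hT.2, hL.2]

theorem Tight.inert_of_mem {Γ : TEnv} {L T : LType} {y : ℕ} (h : Tight Γ L) (hT : T ∈ Γ y) :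
    T.Inert := by
  obtain ⟨-, hΓ, S, hS, hsum⟩ := h
  have hy : y ∈ S := by
    by_contra hy
    simp [hS y hy] at hT
  have hle : mNeCount (Γ y) ≤ ∑ n ∈ S, mNeCount (Γ n) :=
    Finset.single_le_sum_of_canonicallyOrdered (f := fun n => mNeCount (Γ n)) hy
  have hTy := one_add_neCount_le_mNeCount hT
  exact ⟨hΓ y T hT, by omega⟩

/-! ### Typing head normal forms -/

theorem Player.gamma_self (p : Player) : gamma p p = 0 := if_pos rfl

theorem TJ.app_nil {Γ : TEnv} {k : ℕ} {t : CTerm} {q : Player} {L : LType}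
    (h : TJ Γ k t (.arrow [] q q L)) (u : CTerm) : TJ Γ k (.app q t u) L := by
  obtain ⟨π⟩ := h
  have π' := π.app (.nil u)
  rw [TEnv.add_zero, Player.gamma_self] at π'
  exact ⟨π'⟩

namespace CTerm

theorem Neutral.exists_tj_single {t : CTerm} (ht : t.Neutral) {L : LType} (hL : L.Inert) :
    ∃ y T, T.Inert ∧ TJ (.single y T) 0 t L := by
  induction ht generalizing L with
  | var y => exact ⟨y, L, hL, ⟨.ax y L⟩⟩
  | app q u _ ih =>
    obtain ⟨y, T, hT, h⟩ := ih (LType.inert_arrow_iff.2 ⟨rfl, rfl, hL⟩)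
    exact ⟨y, T, hT, h.app_nil u⟩

/-- Here `y` is the head variable of `t` and `T` the type of its axiom in the given derivation. -/
theorem Neutral.exists_mem_inert_imp {t : CTerm} (ht : t.Neutral) {Γ : TEnv} {k : ℕ} {L : LType}
    (h : TJ Γ k t L) : ∃ y, ∃ T ∈ Γ y, T.Inert → k = 0 ∧ L.Inert := by
  obtain ⟨π⟩ := h
  induction ht generalizing Γ k L with
  | var y =>
    cases π
    exact ⟨y, L, TEnv.mem_single.2 ⟨rfl, rfl⟩, fun hL => ⟨rfl, hL⟩⟩
  | app q u _ ih =>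
    cases π with
    | app π μ =>
      obtain ⟨y, T, hTy, inert_imp⟩ := ih π
      refine ⟨y, T, Multiset.mem_add.2 (.inl hTy), fun hT => ?_⟩
      obtain ⟨rfl, harrow⟩ := inert_imp hT
      obtain ⟨rfl, rfl, hL⟩ := LType.inert_arrow_iff.1 harrow
      cases μ
      exact ⟨by rw [Player.gamma_self], hL⟩

theorem HeadNormal.exists_tight {t : CTerm} (ht : t.HeadNormal) :
    ∃ Γ L, TJ Γ 0 t L ∧ Tight Γ L := by
  induction ht with
  | neutral ht =>
    obtain ⟨y, T, hT, h⟩ := ht.exists_tj_single LType.inert_atom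
    exact ⟨_, _, h, tight_single y hT LType.inert_atom⟩
  | lam p _ ih =>
    obtain ⟨Γ, L, ⟨π⟩, hΓ⟩ := ih
    rw [← Γ.cons_head_tail, ← (Γ 0).coe_toList] at π hΓ
    exact ⟨_, _, ⟨π.lam p p⟩, tight_arrow_iff.2 ⟨rfl, hΓ⟩⟩

theorem HeadNormal.eq_zero_of_tight {t : CTerm} (ht : t.HeadNormal) {Γ : TEnv} {k : ℕ} {L : LType}
    (h : TJ Γ k t L) (htight : Tight Γ L) : k = 0 := by
  induction ht generalizing Γ L with
  | neutral ht =>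
    obtain ⟨y, T, hTy, inert_imp⟩ := ht.exists_mem_inert_imp h
    exact (inert_imp (htight.inert_of_mem hTy)).1
  | lam p _ ih =>
    obtain ⟨π⟩ := h
    cases π with
    | lam _ _ _ π => exact ih ⟨π⟩ (tight_arrow_iff.1 htight).2

end CTerm

/-- Tightness and checkers head normal forms: existence of tight derivations, and
zero interaction index of tight derivations. -/
theorem tightness_and_head_normal_forms (h : CTerm) (hh : h.HNF) :
    (∃ (Γ : TEnv) (k : ℕ) (L : LType), Nonempty (Deriv Γ k h L) ∧ Tight Γ L) ∧
    (∀ (Γ : TEnv) (k : ℕ) (L : LType), Nonempty (Deriv Γ k h L) → Tight Γ L → k = 0) := by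
  have hnormal := hh.headNormal
  obtain ⟨Γ, L, htj, htight⟩ := hnormal.exists_tight
  exact ⟨⟨Γ, 0, L, htj, htight⟩, fun _ _ _ htj htight => hnormal.eq_zero_of_tight htj htight⟩
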